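/- Let k ∈ ℕ₀, let a₀,…,a_{k−1} be complex numbers with |a_j| < 1, let Φ_j be generated by Φ₀ = 1, Φ_j(z) = zΦ_{j−1}(z) − a_{j−1}Φ*_{j−1}(z), and let Ψ_j be generated by Ψ₀ = 1, Ψ_j(z) = zΨ_{j−1}(z) + a_{j−1}Ψ*_{j−1}(z). Then Φ*_k(z) + Ψ*_k(z) has no zeros in the closed unit disk and |z·(Φ_k(z) − Ψ_k(z))| < |Φ*_k(z) + Ψ*_k(z)| for all |z| ≤ 1. -/

import Mathlib

/-!
Put `D_j = Φ_j - Ψ_j` and `S_j = Φ*_j + Ψ*_j`. Reversing the Szegő recurrences gives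
`Φ*_{j+1} = Φ*_j - conj(a_j) z Φ_j` and `Ψ*_{j+1} = Ψ*_j + conj(a_j) z Ψ_j`
(`pstar_szego`), so the pair `(D, S)` satisfies a closed recurrence:
`D_{j+1} = z D_j - a_j S_j` and `S_{j+1} = S_j - conj(a_j) z D_j`, with `D_0 = 0`, `S_0 = 2`.
Since `w ↦ (w - a) / (1 - conj(a) w)` maps the open unit disk to itself
(`norm_blaschke_lt`), the inequality `|z D_j| < |S_j|` propagates in `j` for every `|z| ≤ 1`;
being strict, it also shows that `S_j` does not vanish.
-/

open Polynomial

/-- The reversed polynomial `P*(z) = z^n conj(P(1/conj z))` at degree `n`. -/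
noncomputable def pstar (n : ℕ) (P : Polynomial ℂ) : Polynomial ℂ :=
  Polynomial.reflect n (P.map (starRingEnd ℂ))

/-- Homogeneous form of the fact that a disk automorphism preserves the open unit disk. -/
lemma norm_blaschke_lt {a u s : ℂ} (ha : ‖a‖ < 1) (h : ‖u‖ < ‖s‖) :
    ‖u - a * s‖ < ‖s - (starRingEnd ℂ) a * u‖ := by
  have ha2 : ‖a‖ ^ 2 < 1 := by nlinarith [norm_nonneg a]
  have h2 : ‖u‖ ^ 2 < ‖s‖ ^ 2 := by nlinarith [norm_nonneg u]
  have key : ‖s - (starRingEnd ℂ) a * u‖ ^ 2 - ‖u - a * s‖ ^ 2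
      = (1 - ‖a‖ ^ 2) * (‖s‖ ^ 2 - ‖u‖ ^ 2) := by
    simp only [← Complex.normSq_eq_norm_sq, Complex.normSq_apply, Complex.sub_re, Complex.sub_im,
      Complex.mul_re, Complex.mul_im, Complex.conj_re, Complex.conj_im]
    ring
  refine lt_of_pow_lt_pow_left₀ 2 (norm_nonneg _) ?_
  nlinarith [mul_pos (sub_pos.2 ha2) (sub_pos.2 h2)]

lemma natDegree_pstar_le {n : ℕ} {P : ℂ[X]} (hP : P.natDegree ≤ n) :
    (pstar n P).natDegree ≤ n :=
  natDegree_reflect_le.trans (max_le le_rfl (natDegree_map_le.trans hP))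

lemma pstar_pstar (n : ℕ) (P : ℂ[X]) : pstar n (pstar n P) = P := by
  ext i
  simp [pstar, coeff_reflect]

/-- One step of the Szegő recurrence keeps the degree bound, and its reversal is
`P*_{n+1} = P*_n + conj(b) z P_n`. -/
lemma pstar_szego {n : ℕ} {P : ℂ[X]} (hP : P.natDegree ≤ n) (b : ℂ) :
    (X * P + C b * pstar n P).natDegree ≤ n + 1 ∧
    pstar (n + 1) (X * P + C b * pstar n P)
      = pstar n P + C ((starRingEnd ℂ) b) * (X * P) := by
  have hs := natDegree_pstar_le hP
  refine ⟨natDegree_add_le_of_degree_le ?_ ?_, ?_⟩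
  · have := natDegree_mul_le (p := (X : ℂ[X])) (q := P)
    rw [natDegree_X] at this
    omega
  · exact (natDegree_C_mul_le _ _).trans (by omega)
  · have h1 : pstar (n + 1) (X * P) = pstar n P := by
      have := reflect_mul (X : ℂ[X]) (P.map (starRingEnd ℂ)) (F := 1) (G := n)
        natDegree_X_le (natDegree_map_le.trans hP)
      rw [pstar, Polynomial.map_mul, map_X, add_comm n 1, this, pstar]
      simp
    have h2 : pstar (n + 1) (pstar n P) = X * P := by
      have := reflect_mul (1 : ℂ[X]) ((pstar n P).map (starRingEnd ℂ)) (F := 1) (G := n)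
        (by simp) (natDegree_map_le.trans hs)
      have h3 := pstar_pstar n P
      rw [pstar] at h3
      rw [one_mul, h3] at this
      rw [pstar, add_comm n 1, this]
      simp
    have h4 : pstar (n + 1) (X * P + C b * pstar n P)
        = pstar (n + 1) (X * P) + C ((starRingEnd ℂ) b) * pstar (n + 1) (pstar n P) := by
      simp only [pstar, Polynomial.map_add, Polynomial.map_mul, map_C, reflect_add,
        reflect_C_mul]
    rw [h4, h1, h2]

theorem stmt8
    (k : ℕ)
    (a : ℕ → ℂ) (ha : ∀ j < k, ‖a j‖ < 1)
    (Φ : ℕ → Polynomial ℂ) (hΦ0 : Φ 0 = 1)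
    (hΦrec : ∀ j < k, Φ (j + 1) = X * Φ j - C (a j) * pstar j (Φ j))
    (Ψ : ℕ → Polynomial ℂ) (hΨ0 : Ψ 0 = 1)
    (hΨrec : ∀ j < k, Ψ (j + 1) = X * Ψ j + C (a j) * pstar j (Ψ j)) :
    ∀ z : ℂ, ‖z‖ ≤ 1 →
      (pstar k (Φ k) + pstar k (Ψ k)).eval z ≠ 0 ∧
      ‖z * (Φ k - Ψ k).eval z‖ < ‖(pstar k (Φ k) + pstar k (Ψ k)).eval z‖ := by
  intro z hz
  have main : ∀ j ≤ k, (Φ j).natDegree ≤ j ∧ (Ψ j).natDegree ≤ j ∧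
      ‖z * (Φ j - Ψ j).eval z‖ < ‖(pstar j (Φ j) + pstar j (Ψ j)).eval z‖ := by
    intro j
    induction j with
    | zero =>
      intro _
      rw [hΦ0, hΨ0]
      refine ⟨by simp, by simp, ?_⟩
      simp [pstar]
    | succ j ih =>
      intro hj
      obtain ⟨dΦ, dΨ, h⟩ := ih (by omega)
      obtain ⟨dΦ', sΦ⟩ := pstar_szego dΦ (-a j)
      obtain ⟨dΨ', sΨ⟩ := pstar_szego dΨ (a j)
      have eΦ : Φ (j + 1) = X * Φ j + C (-a j) * pstar j (Φ j) := by
        rw [hΦrec j (by omega), C_neg]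
        ring
      have eΨ := hΨrec j (by omega)
      rw [← eΦ] at dΦ' sΦ
      rw [← eΨ] at dΨ' sΨ
      refine ⟨dΦ', dΨ', ?_⟩
      have hD : (Φ (j + 1) - Ψ (j + 1)).eval z = z * (Φ j - Ψ j).eval z
          - a j * (pstar j (Φ j) + pstar j (Ψ j)).eval z := by
        rw [eΦ, eΨ]
        simp only [eval_add, eval_sub, eval_mul, eval_X, eval_C]
        ring
      have hS : (pstar (j + 1) (Φ (j + 1)) + pstar (j + 1) (Ψ (j + 1))).eval z
          = (pstar j (Φ j) + pstar j (Ψ j)).eval z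
            - (starRingEnd ℂ) (a j) * (z * (Φ j - Ψ j).eval z) := by
        rw [sΦ, sΨ]
        simp only [eval_add, eval_sub, eval_mul, eval_X, eval_C, eval_neg, map_neg]
        ring
      rw [hD, hS, norm_mul]
      exact (mul_le_of_le_one_left (norm_nonneg _) hz).trans_lt
        (norm_blaschke_lt (ha j (by omega)) h)
  have h := (main k le_rfl).2.2
  exact ⟨norm_pos_iff.1 ((norm_nonneg _).trans_lt h), h⟩
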